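/- arXiv:2203.00711 — 2 statements merged into one kernel-verified Lean document; each statement's English description precedes it below -/
import Mathlib

section
/- Assume α ≥ 1, λ is nondecreasing on [t₀,∞), b(t) > β'(t) + β(t)/t (equivalently w(t) > 0) for every t ≥ t₀, and (α−3)·w(t) − t·w'(t) ≥ 0 for every t ≥ t₀. Then ∫_{t₀}^{∞} ( (α−3)·t·w(t) − t²·w'(t) )·(Φ_{λ(t)}(x(t)) − Φ*) dt < +∞. -/
open Set MeasureTheory Filter Real

noncomputable section

/-- Convexity for extended-real-valued functions. -/
def EConvexOn {H : Type*} [NormedAddCommGroup H] [NormedSpace ℝ H] (f : H → EReal) : Prop :=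
  ∀ x y : H, ∀ a c : ℝ, 0 ≤ a → 0 ≤ c → a + c = 1 →
    f (a • x + c • y) ≤ (a : EReal) * f x + (c : EReal) * f y

/-- `p` is the proximal point of `f` with parameter `l` at `x`, i.e. the (unique) minimizer of
`y ↦ f y + ‖x - y‖² / (2l)`. -/
def IsProxPt {H : Type*} [NormedAddCommGroup H] [InnerProductSpace ℝ H]
    (f : H → EReal) (l : ℝ) (x p : H) : Prop :=
  ∀ y : H, f p + ((‖x - p‖ ^ 2 / (2 * l) : ℝ) : EReal)
      ≤ f y + ((‖x - y‖ ^ 2 / (2 * l) : ℝ) : EReal)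

/-- The Moreau envelope of `f` with parameter `l` (as a real number). -/
def moreau {H : Type*} [NormedAddCommGroup H] [InnerProductSpace ℝ H]
    (f : H → EReal) (l : ℝ) (x : H) : ℝ :=
  (⨅ y : H, f y + ((‖x - y‖ ^ 2 / (2 * l) : ℝ) : EReal)).toReal

theorem prox_fin {H : Type*} [NormedAddCommGroup H] [InnerProductSpace ℝ H]
    {Φ : H → EReal} {l : ℝ} {x p : H} (hprox : IsProxPt Φ l x p)
    (hΦproper : ∃ y, Φ y ≠ ⊤) : Φ p ≠ ⊤ := by
  obtain ⟨y, hy⟩ := hΦproper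
  intro h
  have h1 := hprox y
  rw [h, EReal.top_add_coe, top_le_iff] at h1
  exact EReal.add_ne_top hy (EReal.coe_ne_top _) h1

theorem prox_real {H : Type*} [NormedAddCommGroup H] [InnerProductSpace ℝ H]
    {Φ : H → EReal} (hΦbot : ∀ y, Φ y ≠ ⊥) {l : ℝ} {x p : H} (hprox : IsProxPt Φ l x p)
    (hΦproper : ∃ y, Φ y ≠ ⊤) {y : H} (hy : Φ y ≠ ⊤) :
    (Φ p).toReal + ‖x - p‖ ^ 2 / (2 * l) ≤ (Φ y).toReal + ‖x - y‖ ^ 2 / (2 * l) := by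
  have h1 := hprox y
  rw [← EReal.coe_toReal (prox_fin hprox hΦproper) (hΦbot p),
    ← EReal.coe_toReal hy (hΦbot y)] at h1
  exact_mod_cast h1

theorem moreau_eq {H : Type*} [NormedAddCommGroup H] [InnerProductSpace ℝ H]
    {Φ : H → EReal} (hΦbot : ∀ y, Φ y ≠ ⊥) {l : ℝ} {x p : H} (hprox : IsProxPt Φ l x p)
    (hΦproper : ∃ y, Φ y ≠ ⊤) :
    moreau Φ l x = (Φ p).toReal + ‖x - p‖ ^ 2 / (2 * l) := by
  have h : (⨅ y : H, Φ y + ((‖x - y‖ ^ 2 / (2 * l) : ℝ) : EReal))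
      = Φ p + ((‖x - p‖ ^ 2 / (2 * l) : ℝ) : EReal) :=
    le_antisymm (iInf_le _ p) (le_iInf hprox)
  unfold moreau
  rw [h, EReal.toReal_add (prox_fin hprox hΦproper) (hΦbot p) (EReal.coe_ne_top _)
    (EReal.coe_ne_bot _), EReal.toReal_coe]

theorem prox_subgrad {H : Type*} [NormedAddCommGroup H] [InnerProductSpace ℝ H]
    {Φ : H → EReal} (hΦbot : ∀ y, Φ y ≠ ⊥) (hconv : EConvexOn Φ)
    {l : ℝ} (hl : 0 < l) {x p : H} (hprox : IsProxPt Φ l x p)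
    (hΦproper : ∃ y, Φ y ≠ ⊤) {y : H} (hy : Φ y ≠ ⊤) :
    (Φ p).toReal + inner ℝ (x - p) (y - p) / l ≤ (Φ y).toReal := by
  have hpt := prox_fin hprox hΦproper
  have key : ∀ c : ℝ, 0 < c → c ≤ 1 →
      (Φ p).toReal + inner ℝ (x - p) (y - p) / l ≤ (Φ y).toReal + c * (‖y - p‖ ^ 2 / (2 * l)) := by
    intro c hc hc1
    have hcv := hconv p y (1 - c) c (by linarith) hc.le (by ring)
    rw [← EReal.coe_toReal hpt (hΦbot p), ← EReal.coe_toReal hy (hΦbot y)] at hcv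
    set q := (1 - c) • p + c • y with hq
    have hqt : Φ q ≠ ⊤ := by
      intro h
      rw [h, top_le_iff] at hcv
      rw [← EReal.coe_mul, ← EReal.coe_mul, ← EReal.coe_add] at hcv
      exact EReal.coe_ne_top _ hcv
    have hcv' : (Φ q).toReal ≤ (1 - c) * (Φ p).toReal + c * (Φ y).toReal := by
      rw [← EReal.coe_toReal hqt (hΦbot q)] at hcv
      exact_mod_cast hcv
    have h1 := prox_real hΦbot hprox hΦproper hqt
    have h2 : ‖x - q‖ ^ 2 = ‖x - p‖ ^ 2 - 2 * c * inner ℝ (x - p) (y - p)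
        + c ^ 2 * ‖y - p‖ ^ 2 := by
      have : x - q = (x - p) - c • (y - p) := by rw [hq]; module
      rw [this, norm_sub_sq_real, inner_smul_right, norm_smul, mul_pow, Real.norm_eq_abs, sq_abs]
      ring
    rw [h2] at h1
    have h3 : (‖x - p‖ ^ 2 - 2 * c * inner ℝ (x - p) (y - p) + c ^ 2 * ‖y - p‖ ^ 2) / (2 * l)
       = ‖x - p‖ ^ 2 / (2 * l) - c * (inner ℝ (x - p) (y - p) / l)
          + c * (c * (‖y - p‖ ^ 2 / (2 * l))) := by
      field_simp
    rw [h3] at h1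
    have h4 : c * ((Φ p).toReal + inner ℝ (x - p) (y - p) / l) ≤
        c * ((Φ y).toReal + c * (‖y - p‖ ^ 2 / (2 * l))) := by linarith
    exact le_of_mul_le_mul_left h4 hc
  have ht : Tendsto (fun c : ℝ => (Φ y).toReal + c * (‖y - p‖ ^ 2 / (2 * l)))
      (nhdsWithin 0 (Ioi 0)) (nhds ((Φ y).toReal + 0 * (‖y - p‖ ^ 2 / (2 * l)))) := by
    apply Tendsto.mono_left _ nhdsWithin_le_nhds
    exact (Continuous.tendsto (by fun_prop) 0)
  rw [zero_mul, add_zero] at ht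
  refine ge_of_tendsto ht ?_
  filter_upwards [Ioc_mem_nhdsGT (zero_lt_one' ℝ)] with c hc
  exact key c hc.1 hc.2

theorem squeeze_deriv {F h k : ℝ → ℝ} {s : Set ℝ} {t d : ℝ}
    (hh : HasDerivWithinAt h d s t) (hk : HasDerivWithinAt k d s t)
    (h0 : h t = 0) (k0 : k t = 0)
    (hF : ∀ r ∈ s, F r - F t ≤ h r) (kF : ∀ r ∈ s, k r ≤ F r - F t) :
    HasDerivWithinAt F d s t := by
  rw [hasDerivWithinAt_iff_isLittleO] at *
  have := hh.norm_left.add hk.norm_left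
  refine Asymptotics.IsBigO.trans_isLittleO (Asymptotics.IsBigO.of_bound 1 ?_) this
  filter_upwards [self_mem_nhdsWithin] with r hr
  have h1 := hF r hr
  have h2 := kF r hr
  simp only [h0, k0, sub_zero, Real.norm_eq_abs, one_mul, smul_eq_mul]
  rw [abs_le, abs_of_nonneg (a := |_| + |_|) (by positivity)]
  constructor
  · linarith [neg_abs_le (k r - (r - t) * d), abs_nonneg (h r - (r - t) * d)]
  · linarith [le_abs_self (h r - (r - t) * d), abs_nonneg (k r - (r - t) * d)]

theorem moreau_values_integral_finite
    {H : Type*} [NormedAddCommGroup H] [InnerProductSpace ℝ H] [CompleteSpace H]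
    (Φ : H → EReal)
    (hΦbot : ∀ y, Φ y ≠ ⊥) (hΦproper : ∃ y, Φ y ≠ ⊤)
    (hΦconv : EConvexOn Φ) (hΦlsc : LowerSemicontinuous Φ)
    (t₀ α : ℝ) (ht₀ : 0 < t₀)
    (β b lam β' b' lam' w' : ℝ → ℝ)
    (hβnonneg : ∀ t ≥ t₀, 0 ≤ β t)
    (hbpos : ∀ t ≥ t₀, 0 < b t)
    (hlampos : ∀ t ≥ t₀, 0 < lam t)
    (hβ' : ∀ t ≥ t₀, HasDerivAt β (β' t) t)
    (hb' : ∀ t ≥ t₀, HasDerivAt b (b' t) t)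
    (hlam' : ∀ t ≥ t₀, HasDerivAt lam (lam' t) t)
    (hw' : ∀ t ≥ t₀, HasDerivAt (fun s => b s - β' s - β s / s) (w' t) t)
    (x v acc p G' : ℝ → H)
    (hx : ∀ t ≥ t₀, HasDerivAt x (v t) t)
    (hv : ∀ t ≥ t₀, HasDerivAt v (acc t) t)
    (hp : ∀ t ≥ t₀, IsProxPt Φ (lam t) (x t) (p t))
    (hG' : ∀ t ≥ t₀, HasDerivAt (fun s => (lam s)⁻¹ • (x s - p s)) (G' t) t)
    (hode : ∀ t ≥ t₀, acc t + (α / t) • v t + β t • G' t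
        + b t • ((lam t)⁻¹ • (x t - p t)) = 0)
    (hα : 1 ≤ α)
    (hlammono : MonotoneOn lam (Set.Ici t₀))
    (hw : ∀ t ≥ t₀, β' t + β t / t < b t)
    (hAs1 : ∀ t ≥ t₀, 0 ≤ (α - 3) * (b t - β' t - β t / t) - t * w' t)
    (z : H) (hz : ∀ y, Φ z ≤ Φ y)
    :
    ∫⁻ t in Set.Ici t₀, ENNReal.ofReal
      (((α - 3) * t * (b t - β' t - β t / t) - t ^ 2 * w' t)
        * (moreau Φ (lam t) (x t) - (Φ z).toReal)) < ⊤ := by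
  have hzt : Φ z ≠ ⊤ := by
    obtain ⟨y, hy⟩ := hΦproper
    exact ne_top_of_le_ne_top hy (hz y)
  have hPz : ∀ t ≥ t₀, (Φ z).toReal ≤ (Φ (p t)).toReal := fun t ht =>
    EReal.toReal_le_toReal (hz _) (hΦbot z) (prox_fin (hp t ht) hΦproper)
  have hFeq : ∀ t ≥ t₀, moreau Φ (lam t) (x t)
      = (Φ (p t)).toReal + ‖x t - p t‖ ^ 2 / (2 * lam t) := fun t ht =>
    moreau_eq hΦbot (hp t ht) hΦproper
  set F : ℝ → ℝ := fun t => moreau Φ (lam t) (x t) with hF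
  set g : ℝ → H := fun s => (lam s)⁻¹ • (x s - p s) with hg
  set w : ℝ → ℝ := fun s => b s - β' s - β s / s with hwdef
  have hFz : ∀ t ≥ t₀, 0 ≤ F t - (Φ z).toReal := by
    intro t ht
    have h1 : F t = _ := hFeq t ht
    have h2 := hlampos t ht
    have h3 : 0 ≤ ‖x t - p t‖ ^ 2 / (2 * lam t) := by positivity
    linarith [hPz t ht]
  have hwpos : ∀ t ≥ t₀, 0 < w t := by
    intro t ht
    have := hw t ht
    simp only [hwdef]; linarith
  -- p differentiable
  have hpd : ∀ t ≥ t₀, HasDerivAt p (v t - (lam t • G' t + lam' t • g t)) t := by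
    intro t ht
    have h1 := (hx t ht).sub ((hlam' t ht).smul (hG' t ht))
    refine h1.congr_of_eventuallyEq ?_
    have hc : ∀ᶠ s in nhds t, 0 < lam s :=
      (hlam' t ht).continuousAt.eventually (lt_mem_nhds (hlampos t ht))
    filter_upwards [hc] with s hs
    simp only [Pi.sub_apply, Pi.smul_apply', hg]
    rw [smul_smul, mul_inv_cancel₀ hs.ne', one_smul]
    abel
  have hgn : ∀ t ≥ t₀, x t - p t = lam t • g t := by
    intro t ht
    simp only [hg]
    rw [smul_smul, mul_inv_cancel₀ (hlampos t ht).ne', one_smul]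
  -- derivative of F
  have hFd : ∀ t ≥ t₀, HasDerivWithinAt F
      (inner ℝ (g t) (v t) - lam' t / 2 * ‖g t‖ ^ 2) (Ici t₀) t := by
    intro t ht
    have hl := hlampos t ht
    have hl0 : (2 * lam t) ≠ 0 := by positivity
    have hn : ‖x t - p t‖ ^ 2 = lam t ^ 2 * ‖g t‖ ^ 2 := by
      rw [hgn t ht, norm_smul, mul_pow, Real.norm_eq_abs, sq_abs]
    have hL : HasDerivAt (fun s => 2 * lam s) (2 * lam' t) t := (hlam' t ht).const_mul 2
    refine squeeze_deriv
      (h := fun s => ‖x s - p t‖ ^ 2 / (2 * lam s) - ‖x t - p t‖ ^ 2 / (2 * lam t))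
      (k := fun s => ‖x s - p s‖ ^ 2 / (2 * lam s) - ‖x t - p s‖ ^ 2 / (2 * lam t))
      ?_ ?_ (by simp) (by simp) ?_ ?_
    · have h1 : HasDerivAt (fun s => ‖x s - p t‖ ^ 2) _ t := ((hx t ht).sub_const (p t)).norm_sq
      have h2 := (h1.div hL hl0).sub_const (‖x t - p t‖ ^ 2 / (2 * lam t))
      refine (h2.congr_deriv ?_).hasDerivWithinAt
      rw [hn, hgn t ht, real_inner_smul_left]
      field_simp
      try ring
    · have h1 : HasDerivAt (fun s => ‖x s - p s‖ ^ 2) _ t := ((hx t ht).sub (hpd t ht)).norm_sq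
      have h1' : HasDerivAt (fun s => ‖x t - p s‖ ^ 2) _ t :=
        ((hpd t ht).const_sub (x t)).norm_sq
      have h2 := (h1.div hL hl0).sub (h1'.div_const (2 * lam t))
      refine (h2.congr_deriv ?_).hasDerivWithinAt
      simp only [Pi.sub_apply]
      rw [hn, hgn t ht]
      simp only [real_inner_smul_left, inner_sub_right, inner_neg_right, inner_add_right,
        real_inner_smul_right, real_inner_self_eq_norm_sq]
      field_simp
      try ring
    · intro r hr
      have h1 := prox_real hΦbot (hp r hr) hΦproper (prox_fin (hp t ht) hΦproper)
      have h2 : F r = _ := hFeq r hr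
      have h3 : F t = _ := hFeq t ht
      simp only [h2, h3]; linarith
    · intro r hr
      have h1 := prox_real hΦbot (hp t ht) hΦproper (prox_fin (hp r hr) hΦproper)
      have h2 : F r = _ := hFeq r hr
      have h3 : F t = _ := hFeq t ht
      simp only [h2, h3]; linarith
  -- energy
  set u : ℝ → H := fun t => (α - 1) • (x t - z) + t • (v t + β t • g t) with hu
  set E : ℝ → ℝ := fun t => t ^ 2 * w t * (F t - (Φ z).toReal) + 1 / 2 * ‖u t‖ ^ 2 with hE
  set E' : ℝ → ℝ := fun t => (2 * t * w t + t ^ 2 * w' t) * (F t - (Φ z).toReal)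
    - (α - 1) * t * w t * inner ℝ (g t) (x t - z)
    - t ^ 2 * w t * (β t + lam' t / 2) * ‖g t‖ ^ 2 with hE'
  have hud : ∀ t ≥ t₀, HasDerivAt u (-(t * w t) • g t) t := by
    intro t ht
    have ht0 : t ≠ 0 := (lt_of_lt_of_le ht₀ ht).ne'
    have h1 := (((hx t ht).sub_const z).const_smul (α - 1)).add
      ((hasDerivAt_id t).smul ((hv t ht).add ((hβ' t ht).smul (hG' t ht))))
    refine HasDerivAt.congr_deriv h1 ?_
    have h2 : acc t = -((α / t) • v t + β t • G' t + b t • g t) := by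
      have := hode t ht
      rw [eq_neg_iff_add_eq_zero, ← this]
      simp only [hg]; abel
    simp only [id, Pi.add_apply, Pi.smul_apply', h2, hwdef]
    match_scalars <;> field_simp <;> ring
  have hEd : ∀ t ≥ t₀, HasDerivWithinAt E (E' t) (Ici t₀) t := by
    intro t ht
    have h1 := ((((hasDerivAt_pow 2 t).mul (hw' t ht)).hasDerivWithinAt (s := Ici t₀)).mul
      ((hFd t ht).sub_const (Φ z).toReal)).add
      ((((hud t ht).norm_sq).const_mul (1 / 2 : ℝ)).hasDerivWithinAt (s := Ici t₀))
    refine HasDerivWithinAt.congr_deriv h1 ?_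
    simp only [Pi.mul_apply, hE']
    have : inner ℝ (u t) (-(t * w t) • g t) = -(t * w t) * ((α - 1) * inner ℝ (g t) (x t - z)
        + t * (inner ℝ (g t) (v t) + β t * ‖g t‖ ^ 2)) := by
      rw [real_inner_smul_right, real_inner_comm]
      simp only [hu, inner_add_right, real_inner_smul_right, real_inner_self_eq_norm_sq]
    rw [this]
    push_cast
    ring
  have hsub : ∀ t ≥ t₀, F t - (Φ z).toReal ≤ inner ℝ (g t) (x t - z) := by
    intro t ht
    have hl := hlampos t ht
    have h1 := prox_subgrad hΦbot hΦconv hl (hp t ht) hΦproper hzt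
    have h3 : F t = _ := hFeq t ht
    have h4 : inner ℝ (g t) (x t - z) = ‖x t - p t‖ ^ 2 / lam t
        - inner ℝ (x t - p t) (z - p t) / lam t := by
      have : x t - z = (x t - p t) - (z - p t) := by abel
      rw [this, inner_sub_right]
      simp only [hg, real_inner_smul_left, real_inner_self_eq_norm_sq]
      field_simp
    have h5 : ‖x t - p t‖ ^ 2 / lam t = 2 * (‖x t - p t‖ ^ 2 / (2 * lam t)) := by field_simp
    have h6 : 0 ≤ ‖x t - p t‖ ^ 2 / (2 * lam t) := by positivity
    rw [h4, h3]; linarith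
  have hlam'0 : ∀ t > t₀, 0 ≤ lam' t := by
    intro t ht
    have h1 := (hlam' t ht.le).hasDerivWithinAt (s := Ici t₀)
    have h2 := hlammono.derivWithin_nonneg (x := t)
    rwa [h1.derivWithin ((uniqueDiffOn_Ici t₀) t ht.le)] at h2
  have hE'le : ∀ t > t₀, ((α - 3) * t * w t - t ^ 2 * w' t) * (F t - (Φ z).toReal) ≤ -E' t := by
    intro t ht
    have ht0 : 0 < t := ht₀.trans ht
    have h1 := mul_le_mul_of_nonneg_left (hsub t ht.le)
      (mul_nonneg (mul_nonneg (sub_nonneg.2 hα) ht0.le) (hwpos t ht.le).le)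
    have h2 : 0 ≤ t ^ 2 * w t * (β t + lam' t / 2) * ‖g t‖ ^ 2 := by
      have := hwpos t ht.le
      have := hβnonneg t ht.le
      have := hlam'0 t ht
      positivity
    simp only [hE']
    linarith
  have hint0 : ∀ t ≥ t₀, 0 ≤ ((α - 3) * t * w t - t ^ 2 * w' t) * (F t - (Φ z).toReal) := by
    intro t ht
    have ht0 : 0 < t := lt_of_lt_of_le ht₀ ht
    have h1 := mul_nonneg ht0.le (hAs1 t ht)
    refine mul_nonneg ?_ (hFz t ht)
    simp only [hwdef]
    linarith
  have hE'np : ∀ t ∈ Ioi t₀, E' t ≤ 0 := fun t ht => by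
    linarith [hE'le t ht, hint0 t (le_of_lt ht)]
  have hE0 : ∀ t ≥ t₀, 0 ≤ E t := by
    intro t ht
    have := hwpos t ht
    have := hFz t ht
    simp only [hE]
    positivity
  have hEanti : AntitoneOn E (Ici t₀) := by
    apply antitoneOn_of_hasDerivWithinAt_nonpos (f' := E') (convex_Ici t₀)
      (fun t ht => (hEd t ht).continuousWithinAt)
    · intro t ht
      exact (hEd t (interior_subset ht)).mono interior_subset
    · intro t ht
      rw [interior_Ici] at ht
      exact hE'np t ht
  obtain ⟨l, hlim⟩ : ∃ l, Tendsto E atTop (nhds l) := by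
    have ha : Antitone (fun t => E (max t t₀)) := fun a c hac =>
      hEanti (mem_Ici.2 (le_max_right _ _)) (mem_Ici.2 (le_max_right _ _)) (max_le_max_right _ hac)
    have hb : BddBelow (range (fun t => E (max t t₀))) :=
      ⟨0, by rintro _ ⟨t, rfl⟩; exact hE0 _ (le_max_right _ _)⟩
    refine ⟨_, (tendsto_atTop_ciInf ha hb).congr' ?_⟩
    filter_upwards [eventually_ge_atTop t₀] with t ht
    rw [max_eq_left ht]
  have hI : IntegrableOn E' (Ioi t₀) :=
    integrableOn_Ioi_deriv_of_nonpos (hEd t₀ le_rfl).continuousWithinAt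
      (fun t ht => (hEd t (le_of_lt ht)).hasDerivAt (Ici_mem_nhds ht)) hE'np hlim
  rw [setLIntegral_congr Ioi_ae_eq_Ici.symm]
  refine lt_of_le_of_lt (setLIntegral_mono' measurableSet_Ioi (fun t ht =>
    ENNReal.ofReal_le_ofReal (hE'le t ht))) ?_
  exact hI.neg.lintegral_lt_top
end
end

section
/- Assume α > 1, λ is nondecreasing on [t₀,∞), b(t) > β'(t) + β(t)/t (equivalently w(t) > 0) for every t ≥ t₀, and there exists ε ∈ (0, α−1) such that (α−3)·w(t) − t·w'(t) ≥ ε·b(t) for every t ≥ t₀. Then ∫_{t₀}^{∞} t·b(t)·(Φ_{λ(t)}(x(t)) − Φ*) dt < +∞. -/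
open Set MeasureTheory Filter Real

noncomputable section

theorem hd_squeeze {S : Set ℝ} {t d : ℝ} {f g h : ℝ → ℝ} (ht : t ∈ S)
    (hf : HasDerivWithinAt f d S t) (hh : HasDerivWithinAt h d S t)
    (hft : f t = g t) (hht : h t = g t)
    (h1 : ∀ s ∈ S, f s ≤ g s) (h2 : ∀ s ∈ S, g s ≤ h s) : HasDerivWithinAt g d S t := by
  have hz : HasDerivWithinAt (fun s => g s - f s) 0 S t := by
    have h3 : HasDerivWithinAt (fun s => h s - f s) 0 S t := (hh.sub hf).congr_deriv (sub_self d)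
    rw [hasDerivWithinAt_iff_isLittleO] at h3 ⊢
    refine Asymptotics.IsLittleO.of_bound ?_
    intro c hc
    filter_upwards [h3.bound hc, self_mem_nhdsWithin] with s hs hsS
    refine le_trans ?_ hs
    have e1 := h1 s hsS
    have e2 := h2 s hsS
    simp only [hft, hht, sub_self, smul_zero, sub_zero, Real.norm_eq_abs]
    rw [abs_of_nonneg (by linarith), abs_of_nonneg (by linarith)]
    linarith
  have := hz.add hf
  simpa using this.congr_of_eventuallyEq (f₁ := g)
    (Filter.Eventually.of_forall fun s => by simp) (by simp)

theorem envelope_deriv {H : Type*} [NormedAddCommGroup H] [InnerProductSpace ℝ H]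
    {S : Set ℝ} {t l' : ℝ} (ht : t ∈ S) {F lam : ℝ → ℝ} {x p : ℝ → H} {v p' : H}
    (hpos : ∀ s ∈ S, 0 < lam s)
    (hle : ∀ s ∈ S, ∀ r ∈ S, F s + ‖x s - p s‖ ^ 2 / (2 * lam s)
      ≤ F r + ‖x s - p r‖ ^ 2 / (2 * lam s))
    (hl : HasDerivWithinAt lam l' S t)
    (hx : HasDerivWithinAt x v S t) (hp : HasDerivWithinAt p p' S t) :
    HasDerivWithinAt (fun s => F s + ‖x s - p s‖ ^ 2 / (2 * lam s))
      (inner ℝ ((lam t)⁻¹ • (x t - p t)) v - l' / 2 * ‖(lam t)⁻¹ • (x t - p t)‖ ^ 2) S t := by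
  have hl0 : lam t ≠ 0 := (hpos t ht).ne'
  have h2l : HasDerivWithinAt (fun s => 2 * lam s) (2 * l') S t := hl.const_mul 2
  have hn : ‖(lam t)⁻¹ • (x t - p t)‖ ^ 2 = (lam t)⁻¹ ^ 2 * ‖x t - p t‖ ^ 2 := by
    rw [norm_smul, mul_pow, Real.norm_eq_abs, sq_abs]
  have U : HasDerivWithinAt (fun s => F t + ‖x s - p t‖ ^ 2 / (2 * lam s))
      (inner ℝ ((lam t)⁻¹ • (x t - p t)) v
        - l' / 2 * ‖(lam t)⁻¹ • (x t - p t)‖ ^ 2) S t := by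
    have := (((hx.sub_const (p t)).norm_sq).div h2l (by simpa using hl0)).const_add (F t)
    refine this.congr_deriv ?_
    rw [hn, real_inner_smul_left]
    field_simp
  have L : HasDerivWithinAt (fun s => (F t + ‖x t - p t‖ ^ 2 / (2 * lam t))
        + (‖x s - p s‖ ^ 2 / (2 * lam s) - ‖x t - p s‖ ^ 2 / (2 * lam t)))
      (inner ℝ ((lam t)⁻¹ • (x t - p t)) v
        - l' / 2 * ‖(lam t)⁻¹ • (x t - p t)‖ ^ 2) S t := by
    have h1 := ((hx.sub hp).norm_sq).div h2l (by simpa using hl0)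
    have h2 := ((hp.const_sub (x t)).norm_sq).div_const (2 * lam t)
    have := (h1.sub h2).const_add (F t + ‖x t - p t‖ ^ 2 / (2 * lam t))
    refine this.congr_deriv ?_
    rw [hn, real_inner_smul_left]
    simp only [Pi.sub_apply, inner_sub_right, inner_neg_right]
    field_simp
    ring
  refine hd_squeeze ht L U (by ring) rfl ?_ ?_
  · intro s hs
    have := hle t ht s hs
    linarith
  · intro s hs
    exact hle s hs t ht

theorem prox_ineq {H : Type*} [NormedAddCommGroup H] [InnerProductSpace ℝ H]
    {x p z : H} {F m l : ℝ} (hl : 0 < l)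
    (h : ∀ s : ℝ, 0 < s → s ≤ 1 → F + ‖x - p‖ ^ 2 / (2 * l)
      ≤ (1 - s) * F + s * m + ‖x - ((1 - s) • p + s • z)‖ ^ 2 / (2 * l)) :
    F + ‖x - p‖ ^ 2 / (2 * l) - m ≤ inner ℝ (l⁻¹ • (x - p)) (x - z) := by
  have key : ∀ s : ℝ, 0 < s → s ≤ 1 →
      F - m ≤ l⁻¹ * inner ℝ (x - p) (p - z) + s * (‖p - z‖ ^ 2 / (2 * l)) := by
    intro s hs hs1
    have h1 := h s hs hs1
    have e : x - ((1 - s) • p + s • z) = (x - p) + s • (p - z) := by module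
    rw [e, norm_add_sq_real, real_inner_smul_right, norm_smul, mul_pow, Real.norm_eq_abs,
      sq_abs] at h1
    have h2 : s * (F - m) ≤ s * (l⁻¹ * inner ℝ (x - p) (p - z)
        + s * (‖p - z‖ ^ 2 / (2 * l))) := by
      have e2 : (‖x - p‖ ^ 2 + 2 * (s * inner ℝ (x - p) (p - z)) + s ^ 2 * ‖p - z‖ ^ 2) / (2 * l)
        = ‖x - p‖ ^ 2 / (2 * l) + s * (l⁻¹ * inner ℝ (x - p) (p - z)
        + s * (‖p - z‖ ^ 2 / (2 * l))) := by
        field_simp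
        ring
      rw [e2] at h1
      linarith
    exact le_of_mul_le_mul_left h2 hs
  have key2 : F - m ≤ l⁻¹ * inner ℝ (x - p) (p - z) := by
    have hT : Tendsto (fun s : ℝ => l⁻¹ * inner ℝ (x - p) (p - z)
        + s * (‖p - z‖ ^ 2 / (2 * l))) (nhdsWithin 0 (Ioi 0))
        (nhds (l⁻¹ * inner ℝ (x - p) (p - z) + 0 * (‖p - z‖ ^ 2 / (2 * l)))) :=
      ((continuous_const.add (continuous_id.mul continuous_const)).tendsto 0).mono_left
        nhdsWithin_le_nhds
    rw [zero_mul, add_zero] at hT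
    refine ge_of_tendsto hT ?_
    filter_upwards [Ioc_mem_nhdsGT (zero_lt_one' ℝ)] with s hs
    exact key s hs.1 hs.2
  have e : x - z = (x - p) + (p - z) := by abel
  rw [e, real_inner_smul_left, inner_add_right, real_inner_self_eq_norm_sq, mul_add]
  have : ‖x - p‖ ^ 2 / (2 * l) ≤ l⁻¹ * ‖x - p‖ ^ 2 := by
    rw [inv_mul_eq_div]
    exact div_le_div_of_nonneg_left (sq_nonneg _) hl (by linarith)
  linarith

theorem lint_finite {t₀ ε : ℝ} (hε : 0 < ε) {E E' f : ℝ → ℝ}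
    (hE : ∀ t ≥ t₀, HasDerivWithinAt E (E' t) (Ici t₀) t)
    (hE0 : ∀ t ≥ t₀, 0 ≤ E t) (hf : ∀ t ≥ t₀, 0 ≤ f t)
    (hle : ∀ t ≥ t₀, E' t ≤ - (ε * f t)) :
    ∫⁻ t in Set.Ici t₀, ENNReal.ofReal (f t) < ⊤ := by
  have hneg : ∀ t ≥ t₀, E' t ≤ 0 := fun t ht =>
    (hle t ht).trans (by have := mul_nonneg hε.le (hf t ht); linarith)
  have hD : ∀ t ∈ Ioi t₀, HasDerivAt E (E' t) t := fun t ht =>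
    (hE t (le_of_lt ht)).hasDerivAt (Ici_mem_nhds ht)
  have hanti : AntitoneOn E (Ici t₀) := by
    refine antitoneOn_of_deriv_nonpos (convex_Ici t₀)
      (fun t ht => (hE t ht).continuousWithinAt) ?_ ?_
    · intro t ht
      rw [interior_Ici] at ht
      exact (hD t ht).differentiableAt.differentiableWithinAt
    · intro t ht
      rw [interior_Ici] at ht
      rw [(hD t ht).deriv]
      exact hneg t (le_of_lt ht)
  obtain ⟨l, hl⟩ : ∃ l, Tendsto E atTop (nhds l) := by
    have hA : Antitone (fun t => E (max t t₀)) := fun a c hac =>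
      hanti (mem_Ici.2 (le_max_right _ _)) (mem_Ici.2 (le_max_right _ _)) (max_le_max_right _ hac)
    refine ⟨_, (tendsto_atTop_ciInf hA ⟨0, ?_⟩).congr' ?_⟩
    · rintro _ ⟨t, rfl⟩
      exact hE0 _ (le_max_right _ _)
    · filter_upwards [eventually_ge_atTop t₀] with t ht
      simp [max_eq_left ht]
  have hI := integrableOn_Ioi_deriv_of_nonpos (hE t₀ le_rfl).continuousWithinAt hD
    (fun t ht => hneg t (le_of_lt ht)) hl
  have hI2 : IntegrableOn (fun t => - (ε⁻¹ * E' t)) (Ici t₀) := by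
    rw [integrableOn_Ici_iff_integrableOn_Ioi]
    exact (hI.const_mul ε⁻¹).neg
  refine lt_of_le_of_lt (setLIntegral_mono' measurableSet_Ici (fun t ht => ?_))
    hI2.lintegral_lt_top
  refine ENNReal.ofReal_le_ofReal ?_
  have := hle t ht
  rw [← mul_neg, le_inv_mul_iff₀ hε]
  linarith

theorem weighted_moreau_values_integral_finite
    {H : Type*} [NormedAddCommGroup H] [InnerProductSpace ℝ H] [CompleteSpace H]
    (Φ : H → EReal)
    (hΦbot : ∀ y, Φ y ≠ ⊥) (hΦproper : ∃ y, Φ y ≠ ⊤)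
    (hΦconv : EConvexOn Φ) (hΦlsc : LowerSemicontinuous Φ)
    (t₀ α : ℝ) (ht₀ : 0 < t₀)
    (β b lam β' b' lam' w' : ℝ → ℝ)
    (hβnonneg : ∀ t ≥ t₀, 0 ≤ β t)
    (hbpos : ∀ t ≥ t₀, 0 < b t)
    (hlampos : ∀ t ≥ t₀, 0 < lam t)
    (hβ' : ∀ t ≥ t₀, HasDerivAt β (β' t) t)
    (hb' : ∀ t ≥ t₀, HasDerivAt b (b' t) t)
    (hlam' : ∀ t ≥ t₀, HasDerivAt lam (lam' t) t)
    (hw' : ∀ t ≥ t₀, HasDerivAt (fun s => b s - β' s - β s / s) (w' t) t)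
    (x v acc p G' : ℝ → H)
    (hx : ∀ t ≥ t₀, HasDerivAt x (v t) t)
    (hv : ∀ t ≥ t₀, HasDerivAt v (acc t) t)
    (hp : ∀ t ≥ t₀, IsProxPt Φ (lam t) (x t) (p t))
    (hG' : ∀ t ≥ t₀, HasDerivAt (fun s => (lam s)⁻¹ • (x s - p s)) (G' t) t)
    (hode : ∀ t ≥ t₀, acc t + (α / t) • v t + β t • G' t
        + b t • ((lam t)⁻¹ • (x t - p t)) = 0)
    (hα : 1 < α)
    (hlammono : MonotoneOn lam (Set.Ici t₀))
    (hw : ∀ t ≥ t₀, β' t + β t / t < b t)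
    (hAs2 : ∃ ε, 0 < ε ∧ ε < α - 1 ∧
      ∀ t ≥ t₀, ε * b t ≤ (α - 3) * (b t - β' t - β t / t) - t * w' t)
    (z : H) (hz : ∀ y, Φ z ≤ Φ y)
    :
    ∫⁻ t in Set.Ici t₀, ENNReal.ofReal
      (t * b t * (moreau Φ (lam t) (x t) - (Φ z).toReal)) < ⊤ := by
  obtain ⟨ε, hε, -, hA⟩ := hAs2
  obtain ⟨y0, hy0⟩ := hΦproper
  have hzt : Φ z ≠ ⊤ := fun h => hy0 (top_le_iff.mp (h ▸ hz y0))
  set m := (Φ z).toReal with hm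
  have hzm : Φ z = (m : EReal) := (EReal.coe_toReal hzt (hΦbot z)).symm
  have hpt : ∀ t ≥ t₀, Φ (p t) ≠ ⊤ := by
    intro t ht h
    have := hp t ht z
    rw [h, EReal.top_add_coe, hzm, ← EReal.coe_add] at this
    exact EReal.coe_ne_top _ (top_le_iff.mp this)
  set F : ℝ → ℝ := fun t => (Φ (p t)).toReal with hF
  have hpF : ∀ t ≥ t₀, Φ (p t) = (F t : EReal) := fun t ht =>
    (EReal.coe_toReal (hpt t ht) (hΦbot _)).symm
  have hmF : ∀ t ≥ t₀, m ≤ F t := by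
    intro t ht
    have := hz (p t)
    rw [hzm, hpF t ht] at this
    exact EReal.coe_le_coe_iff.mp this
  have hmor : ∀ t ≥ t₀, moreau Φ (lam t) (x t) = F t + ‖x t - p t‖ ^ 2 / (2 * lam t) := by
    intro t ht
    have h1 : (⨅ y : H, Φ y + ((‖x t - y‖ ^ 2 / (2 * lam t) : ℝ) : EReal))
        = ((F t + ‖x t - p t‖ ^ 2 / (2 * lam t) : ℝ) : EReal) := by
      rw [EReal.coe_add, ← hpF t ht]
      exact le_antisymm (iInf_le _ (p t)) (le_iInf (hp t ht))
    rw [moreau, h1, EReal.toReal_coe]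
  have hle : ∀ s ∈ Ici t₀, ∀ r ∈ Ici t₀, F s + ‖x s - p s‖ ^ 2 / (2 * lam s)
      ≤ F r + ‖x s - p r‖ ^ 2 / (2 * lam s) := by
    intro s hs r hr
    have := hp s hs (p r)
    rw [hpF s hs, hpF r hr, ← EReal.coe_add, ← EReal.coe_add] at this
    exact EReal.coe_le_coe_iff.mp this
  set G : ℝ → H := fun s => (lam s)⁻¹ • (x s - p s) with hG
  have hGz : ∀ t ≥ t₀, F t + ‖x t - p t‖ ^ 2 / (2 * lam t) - m ≤ inner ℝ (G t) (x t - z) := by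
    intro t ht
    refine prox_ineq (hlampos t ht) ?_
    intro s hs hs1
    have h1 := hp t ht ((1 - s) • p t + s • z)
    have h2 := hΦconv (p t) z (1 - s) s (by linarith) hs.le (by ring)
    have h3 := h1.trans (add_le_add_left h2 _)
    rw [hpF t ht, hzm, ← EReal.coe_mul, ← EReal.coe_mul, ← EReal.coe_add, ← EReal.coe_add,
      ← EReal.coe_add] at h3
    exact EReal.coe_le_coe_iff.mp h3
  have hl'0 : ∀ t ≥ t₀, 0 ≤ lam' t := by
    intro t ht
    have h1 := (hlam' t ht).hasDerivWithinAt (s := Ici t₀)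
    rw [← h1.derivWithin (uniqueDiffOn_Ici t₀ t ht)]
    exact hlammono.derivWithin_nonneg
  have hphi : ∀ t ≥ t₀, HasDerivWithinAt (fun s => F s + ‖x s - p s‖ ^ 2 / (2 * lam s))
      (inner ℝ (G t) (v t) - lam' t / 2 * ‖G t‖ ^ 2) (Ici t₀) t := by
    intro t ht
    have hp1 : HasDerivWithinAt p (v t - (lam t • G' t + lam' t • G t)) (Ici t₀) t := by
      have h1 := ((hx t ht).sub ((hlam' t ht).smul (hG' t ht))).hasDerivWithinAt (s := Ici t₀)
      have e : ∀ s ∈ Ici t₀, p s = (x - lam • G) s := by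
        intro s hs
        simp [hG, smul_smul, mul_inv_cancel₀ (hlampos s hs).ne']
      exact h1.congr e (e t ht)
    exact envelope_deriv (S := Ici t₀) ht hlampos hle (hlam' t ht).hasDerivWithinAt
      (hx t ht).hasDerivWithinAt hp1
  set w : ℝ → ℝ := fun s => b s - β' s - β s / s with hwdef
  have hw0 : ∀ t ≥ t₀, 0 < w t := fun t ht => by have := hw t ht; simp only [hwdef]; linarith
  set φ : ℝ → ℝ := fun s => F s + ‖x s - p s‖ ^ 2 / (2 * lam s) with hφ
  have hφm : ∀ t ≥ t₀, 0 ≤ φ t - m := by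
    intro t ht
    have h1 := hmF t ht
    have h2 : 0 ≤ ‖x t - p t‖ ^ 2 / (2 * lam t) :=
      div_nonneg (sq_nonneg _) (by have := hlampos t ht; linarith)
    simp only [hφ]
    linarith
  set η : ℝ → H := fun s => (α - 1) • (x s - z) + s • (v s + β s • G s) with hη
  have hη' : ∀ t ≥ t₀, HasDerivAt η (-(t * w t) • G t) t := by
    intro t ht
    have ht0 : t ≠ 0 := (lt_of_lt_of_le ht₀ ht).ne'
    have h1 := (((hx t ht).sub_const z).const_smul (α - 1)).add
      ((hasDerivAt_id t).smul ((hv t ht).add ((hβ' t ht).smul (hG' t ht))))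
    refine h1.congr_deriv ?_
    have ha : acc t = -((α / t) • v t + β t • G' t + b t • G t) := by
      rw [eq_neg_iff_add_eq_zero, ← hode t ht]
      simp only [hG]
      abel
    simp only [id, Pi.add_apply, Pi.smul_apply', ha, hwdef]
    match_scalars <;> field_simp <;> ring
  set E : ℝ → ℝ := fun s => s ^ 2 * w s * (φ s - m) + ‖η s‖ ^ 2 / 2 with hEdef
  have hE : ∀ t ≥ t₀, HasDerivWithinAt E
      ((2 * t * w t + t ^ 2 * w' t) * (φ t - m)
        + t ^ 2 * w t * (inner ℝ (G t) (v t) - lam' t / 2 * ‖G t‖ ^ 2)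
        + inner ℝ (η t) (-(t * w t) • G t)) (Ici t₀) t := by
    intro t ht
    have h1 := ((((hasDerivAt_id t).pow 2).mul (hw' t ht)).hasDerivWithinAt (s := Ici t₀)).mul
      ((hphi t ht).sub_const m)
    have h2 := (((hη' t ht).norm_sq).div_const 2).hasDerivWithinAt (s := Ici t₀)
    refine (h1.add h2).congr_deriv ?_
    simp
    ring
  have hfin := lint_finite (t₀ := t₀) (E := E) (f := fun t => t * b t * (φ t - m)) hε hE ?_ ?_ ?_
  · refine lt_of_le_of_lt (le_of_eq ?_) hfin
    refine setLIntegral_congr_fun measurableSet_Ici (fun t ht => ?_)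
    simp only [hmor t ht, hφ]
  · intro t ht
    have := mul_nonneg (mul_nonneg (sq_nonneg t) (hw0 t ht).le) (hφm t ht)
    simp only [hEdef]
    positivity
  · intro t ht
    exact mul_nonneg (mul_nonneg (ht₀.le.trans ht) (hbpos t ht).le) (hφm t ht)
  · intro t ht
    have ht0 : 0 < t := lt_of_lt_of_le ht₀ ht
    have hin : inner ℝ (η t) (-(t * w t) • G t) = -(t * w t) * ((α - 1) * inner ℝ (G t) (x t - z)
        + t * (inner ℝ (G t) (v t) + β t * ‖G t‖ ^ 2)) := by
      rw [real_inner_smul_right, real_inner_comm]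
      simp only [hη, inner_add_right, real_inner_smul_right, real_inner_self_eq_norm_sq]
    rw [hin]
    have a1 : 0 ≤ t ^ 2 * w t * (lam' t / 2 * ‖G t‖ ^ 2) :=
      mul_nonneg (mul_nonneg (sq_nonneg t) (hw0 t ht).le)
        (mul_nonneg (by have := hl'0 t ht; linarith) (sq_nonneg _))
    have a2 : 0 ≤ t * w t * (t * (β t * ‖G t‖ ^ 2)) :=
      mul_nonneg (mul_nonneg ht0.le (hw0 t ht).le)
        (mul_nonneg ht0.le (mul_nonneg (hβnonneg t ht) (sq_nonneg _)))
    have a3 : 0 ≤ t * w t * (α - 1) * (inner ℝ (G t) (x t - z) - (φ t - m)) :=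
      mul_nonneg (mul_nonneg (mul_nonneg ht0.le (hw0 t ht).le) (by linarith))
        (by have := hGz t ht; simp only [hφ]; linarith)
    have a4 : 0 ≤ t * (φ t - m) * ((α - 3) * w t - t * w' t - ε * b t) :=
      mul_nonneg (mul_nonneg ht0.le (hφm t ht))
        (by have := hA t ht; simp only [hwdef]; linarith)
    nlinarith [a1, a2, a3, a4]
end
end
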